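/- Suppose F satisfies (G1) and the Perron–Frobenius operator P_σ of the base shift has spectral gap on d_θ-Lipschitz functions (together with the Lasota–Yorke inequality ‖P_σ^n φ‖_θ ≤ θ^n‖φ‖_θ + C₂‖φ‖_∞). Then the transfer operator F^* : S^∞ → S^∞ can be written F^* = P + N where: (a) P is a projection (P² = P) with one-dimensional image; (b) there exist ξ ∈ (0,1) and K > 0 such that ‖N^n(μ)‖_{S^∞} ≤ K ξ^n ‖μ‖_{S^∞} for every μ ∈ S^∞ and n ≥ 1; and (c) PN = NP = 0. -/

import Mathlib

open MeasureTheory ENNReal Set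

namespace RDS

/-- The one-sided subshift of finite type `Σ_A^+` determined by the 0-1 matrix `A`. -/
abbrev SigmaA (N : ℕ) (A : Fin N → Fin N → Bool) :=
  {x : ℕ → Fin N // ∀ i, A (x i) (x (i + 1)) = true}

variable {N : ℕ} {A : Fin N → Fin N → Bool}

/-- The shift map `σ` on `Σ_A^+`. -/
def shift (x : SigmaA N A) : SigmaA N A :=
  ⟨fun i => x.val (i + 1), fun i => x.prop (i + 1)⟩

/-- Aperiodicity of a 0-1 matrix: some power has all entries positive. -/
def Aperiodic (A : Fin N → Fin N → Bool) : Prop :=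
  ∃ k : ℕ, 0 < k ∧ ∀ i j,
    0 < ((Matrix.of fun a b => if A a b then (1 : ℕ) else 0) ^ k) i j

/-- The metric `d_θ(x,y) = Σ_i θ^i (1 - δ(x_i, y_i))` on `Σ_A^+`. -/
noncomputable def dTheta (θ : ℝ) (x y : SigmaA N A) : ℝ :=
  ∑' i : ℕ, θ ^ i * (if x.val i = y.val i then (0 : ℝ) else 1)

/-- Cylinder sets of `Σ_A^+`. -/
def cylinder (n : ℕ) (w : Fin (n + 1) → Fin N) : Set (SigmaA N A) :=
  {x | ∀ i : Fin (n + 1), x.val i = w i}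

/-- `m` is a Markov measure on `Σ_A^+` compatible with `A`: it is given on
cylinders by a stochastic matrix `P` (vanishing where `A` vanishes) and a
stationary probability vector `p`. -/
def IsMarkov (m : Measure (SigmaA N A)) : Prop :=
  ∃ (p : Fin N → ℝ≥0∞) (P : Fin N → Fin N → ℝ≥0∞),
    (∑ i, p i = 1) ∧ (∀ i, ∑ j, P i j = 1) ∧ (∀ j, ∑ i, p i * P i j = p j) ∧
    (∀ i j, A i j = false → P i j = 0) ∧
    ∀ (n : ℕ) (w : Fin (n + 1) → Fin N),
      m (cylinder n w) = p (w 0) * ∏ i : Fin n, P (w i.castSucc) (w i.succ)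

/-- `σ_i⁻¹(γ)`: the sequence `γ` with the symbol `i` prepended
(defined when `A i γ₀ = 1`), i.e. the inverse branch of the restriction `σ_i`
of `σ` to the cylinder `[i]`. -/
def prepend (i : Fin N) (x : SigmaA N A) (h : A i (x.val 0) = true) : SigmaA N A :=
  ⟨fun n => match n with
    | 0 => i
    | Nat.succ k => x.val k,
   fun j => match j with
    | 0 => h
    | Nat.succ k => x.prop k⟩

/-- `f` is `L`-Lipschitz with respect to the distance function `d`. -/
def LipWithD {X : Type*} (d : X → X → ℝ) (L : ℝ) (f : X → ℝ) : Prop :=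
  ∀ x y, |f x - f y| ≤ L * d x y

/-- `f` is Lipschitz with respect to the distance function `d`. -/
def LipD {X : Type*} (d : X → X → ℝ) (f : X → ℝ) : Prop :=
  ∃ L : ℝ, LipWithD d L f

/-- The best Lipschitz constant of `f` with respect to `d` (valued in `ℝ≥0∞`). -/
noncomputable def lipConst {X : Type*} (d : X → X → ℝ) (f : X → ℝ) : ℝ≥0∞ :=
  ⨆ (x : X) (y : X), ENNReal.ofReal (|f x - f y| / d x y)

/-- The sup norm of `f` (valued in `ℝ≥0∞`). -/
noncomputable def supNormE {X : Type*} (f : X → ℝ) : ℝ≥0∞ :=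
  ⨆ x : X, ENNReal.ofReal |f x|

/-- The norm `‖f‖_θ = ‖f‖_∞ + Lip_d(f)`. -/
noncomputable def thetaNorm {X : Type*} (d : X → X → ℝ) (f : X → ℝ) : ℝ≥0∞ :=
  supNormE f + lipConst d f

/-- The Perron-Frobenius operator duality characterizing `P_σ`:
`∫ P_σ(φ) · ψ dm = ∫ φ · (ψ ∘ σ) dm` for integrable `φ` and bounded measurable `ψ`. -/
def IsPerronFrobenius (m : Measure (SigmaA N A))
    (Pσ : (SigmaA N A → ℝ) → SigmaA N A → ℝ) : Prop :=
  ∀ φ ψ : SigmaA N A → ℝ, Integrable φ m → Measurable ψ → (∃ C, ∀ x, |ψ x| ≤ C) →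
    ∫ x, Pσ φ x * ψ x ∂m = ∫ x, φ x * ψ (shift x) ∂m

/-- Spectral gap for `P_σ` on `d_θ`-Lipschitz functions with constants `D`, `r`:
`‖P_σ^n φ‖_θ ≤ D r^n ‖φ‖_θ` for all `n` and all `d_θ`-Lipschitz `φ` with
`∫ φ dm = 0`. -/
def HasGap (m : Measure (SigmaA N A)) (θ : ℝ)
    (Pσ : (SigmaA N A → ℝ) → SigmaA N A → ℝ) (D r : ℝ) : Prop :=
  ∀ φ : SigmaA N A → ℝ, LipD (dTheta θ) φ → (∫ x, φ x ∂m) = 0 →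
    ∀ n : ℕ, thetaNorm (dTheta θ) (Pσ^[n] φ) ≤
      ENNReal.ofReal (D * r ^ n) * thetaNorm (dTheta θ) φ

/-- `Jm i` is the Jacobian `J_{m,σ_i}` of `m` with respect to the branch `σ_i`
(the restriction of `σ` to the cylinder `[i]`): `m (σ_i(E)) = ∫_E J_{m,σ_i} dm`
for every measurable `E` (intersected with `[i]`). -/
def IsJacobian (m : Measure (SigmaA N A)) (Jm : Fin N → SigmaA N A → ℝ) : Prop :=
  ∀ (i : Fin N) (E : Set (SigmaA N A)), MeasurableSet E →
    m {γ : SigmaA N A | ∃ h : A i (γ.val 0) = true, prepend i γ h ∈ E} =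
      ∫⁻ x in E ∩ {x : SigmaA N A | x.val 0 = i}, ENNReal.ofReal (Jm i x) ∂m

variable {K : Type*} [MetricSpace K] [MeasurableSpace K]

/-- The Wasserstein-Kantorovich like distance `W(ν₁,ν₂)`: the supremum of
`|∫ g dν₁ - ∫ g dν₂|` over `g : K → ℝ` with `Lip(g) ≤ 1` and `‖g‖_∞ ≤ 1`.
Applied with `ν₂ = 0` it gives the norm `‖ν₁‖_W`; applied to the two parts of a
decomposition of a signed measure it gives its `‖·‖_W` norm. -/
noncomputable def wDist (ν₁ ν₂ : Measure K) : ℝ≥0∞ :=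
  ⨆ g : {g : K → ℝ // LipschitzWith 1 g ∧ ∀ z, |g z| ≤ 1},
    ENNReal.ofReal |∫ z, g.val z ∂ν₁ - ∫ z, g.val z ∂ν₂|

/-- The skew product `F(x,z) = (σ(x), G(x,z))`. -/
def skew (G : SigmaA N A × K → K) (p : SigmaA N A × K) : SigmaA N A × K :=
  (shift p.1, G p)

/-- The transfer operator `F^* μ (E) = μ (F⁻¹ E)` acting on signed measures. -/
noncomputable def transfer (G : SigmaA N A × K → K)
    (μ : SignedMeasure (SigmaA N A × K)) : SignedMeasure (SigmaA N A × K) :=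
  μ.map (skew G)

/-- Condition (G1): uniform contraction of the vertical fibers with rate `α`. -/
def CondG1 (G : SigmaA N A × K → K) (α : ℝ) : Prop :=
  ∀ (x : SigmaA N A) (z₁ z₂ : K), dist (G (x, z₁)) (G (x, z₂)) ≤ α * dist z₁ z₂

/-- Condition (G2): `x ↦ G(x,z)` is `d_θ`-Lipschitz with constant `H`,
uniformly in `z`. -/
def CondG2 (θ : ℝ) (G : SigmaA N A × K → K) (H : ℝ) : Prop :=
  ∀ (z : K) (x y : SigmaA N A), dist (G (x, z)) (G (y, z)) ≤ H * dTheta θ x y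

/-- `T` is (the path `γ ↦ μ|_γ` of) a disintegration of `μ` along the vertical
fibers, over the reference measure `m`: `μ(E) = ∫ (μ|_γ)(E ∩ γ) dm(γ)`. -/
def IsDisint (m : Measure (SigmaA N A)) (μ : Measure (SigmaA N A × K))
    (T : SigmaA N A → Measure K) : Prop :=
  (∀ E : Set (SigmaA N A × K), MeasurableSet E →
      μ E = ∫⁻ γ, T γ {z | (γ, z) ∈ E} ∂m) ∧
  ∀ E : Set K, MeasurableSet E → Measurable fun γ => T γ E

/-- The (essential) `‖·‖_W`-Lipschitz constant of a path of measures,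
`|Γ|_θ^ω = ess sup_{γ₁ ≠ γ₂} ‖Γ(γ₁) - Γ(γ₂)‖_W / d_θ(γ₁,γ₂)`. -/
noncomputable def pathLip (m : Measure (SigmaA N A)) (θ : ℝ)
    (T : SigmaA N A → Measure K) : ℝ≥0∞ :=
  essSup (fun p : SigmaA N A × SigmaA N A =>
    wDist (T p.1) (T p.2) / ENNReal.ofReal (dTheta θ p.1 p.2)) (m.prod m)

/-- The Lipschitz constant `|μ|_θ` of a positive measure: the infimum over
disintegrations `ω` of `μ` of `|μ|_θ^ω`. -/
noncomputable def lipDisint (m : Measure (SigmaA N A)) (θ : ℝ)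
    (μ : Measure (SigmaA N A × K)) : ℝ≥0∞ :=
  ⨅ T : {T : SigmaA N A → Measure K // IsDisint m μ T}, pathLip m θ T.val

/-- The fiberwise transfer formula: the path representing `F^*μ` induced by the
path `T` representing `μ`, i.e.
`γ ↦ Σ_i 1_{σ([i])}(γ) (F_{iγ})_*(T(iγ)) / J_{m,σ_i}(iγ)`. -/
noncomputable def transferPath (G : SigmaA N A × K → K) (Jm : Fin N → SigmaA N A → ℝ)
    (T : SigmaA N A → Measure K) : SigmaA N A → Measure K :=
  fun γ => ∑ i : Fin N, if h : A i (γ.val 0) = true then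
      ENNReal.ofReal ((Jm i (prepend i γ h))⁻¹) •
        ((T (prepend i γ h)).map fun z => G (prepend i γ h, z))
    else 0

variable [BorelSpace K] [CompactSpace K] [Nonempty K]

/-- The fiberwise restriction `μ|_γ = π₂_* (φ₁(γ) μ_γ)` of a finite positive
measure `μ` on `Σ_A^+ × K`, where `({μ_γ}_γ, φ₁ m)` is the Rokhlin
disintegration of `μ` along the vertical fibers and `φ₁ = d(π₁_*μ)/dm`. -/
noncomputable def fiberR (m : Measure (SigmaA N A))
    (μ : Measure (SigmaA N A × K)) (γ : SigmaA N A) : Measure K := by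
  by_cases h : IsFiniteMeasure μ
  · haveI := h
    exact (μ.fst.rnDeriv m γ) • μ.condKernel γ
  · exact 0

/-- The norm `‖μ‖_∞ = ess sup_γ ‖μ|_γ‖_W` of a signed measure written as a
difference `μ = μ₁ - μ₂` of positive measures. -/
noncomputable def infNormPair (m : Measure (SigmaA N A))
    (μ₁ μ₂ : Measure (SigmaA N A × K)) : ℝ≥0∞ :=
  essSup (fun γ => wDist (fiberR m μ₁ γ) (fiberR m μ₂ γ)) m

/-- The marginal density `φ₁ = d(π₁_*μ)/dm` of the signed measure `μ = μ₁ - μ₂`. -/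
noncomputable def phiPair (m : Measure (SigmaA N A))
    (μ₁ μ₂ : Measure (SigmaA N A × K)) (γ : SigmaA N A) : ℝ :=
  (μ₁.fst.rnDeriv m γ).toReal - (μ₂.fst.rnDeriv m γ).toReal

/-- Membership in `AB`: both parts are finite with first marginal absolutely
continuous with respect to `m`. -/
def MemABPair (m : Measure (SigmaA N A)) (μ₁ μ₂ : Measure (SigmaA N A × K)) : Prop :=
  μ₁.fst ≪ m ∧ μ₂.fst ≪ m ∧ IsFiniteMeasure μ₁ ∧ IsFiniteMeasure μ₂

/-- Membership in `S^∞`: `μ ∈ AB`, `‖μ‖_∞ < ∞` and the marginal density `φ₁`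
has a `d_θ`-Lipschitz version. -/
def MemSPair (m : Measure (SigmaA N A)) (θ : ℝ)
    (μ₁ μ₂ : Measure (SigmaA N A × K)) : Prop :=
  MemABPair m μ₁ μ₂ ∧ infNormPair m μ₁ μ₂ < ⊤ ∧
    ∃ ψ : SigmaA N A → ℝ, ψ =ᵐ[m] phiPair m μ₁ μ₂ ∧ LipD (dTheta θ) ψ

/-- `‖φ₁‖_θ`, computed on the best version of the marginal density. -/
noncomputable def thetaNormMu (m : Measure (SigmaA N A)) (θ : ℝ)
    (μ₁ μ₂ : Measure (SigmaA N A × K)) : ℝ≥0∞ :=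
  ⨅ ψ : {ψ : SigmaA N A → ℝ // ψ =ᵐ[m] phiPair m μ₁ μ₂}, thetaNorm (dTheta θ) ψ.val

/-- The norm `‖μ‖_{S^∞} = ‖φ₁‖_θ + ‖μ‖_∞`. -/
noncomputable def sNormPair (m : Measure (SigmaA N A)) (θ : ℝ)
    (μ₁ μ₂ : Measure (SigmaA N A × K)) : ℝ≥0∞ :=
  thetaNormMu m θ μ₁ μ₂ + infNormPair m μ₁ μ₂

/-- Positive part of a signed measure. -/
noncomputable def jPos {X : Type*} [MeasurableSpace X] (μ : SignedMeasure X) : Measure X :=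
  μ.toJordanDecomposition.posPart

/-- Negative part of a signed measure. -/
noncomputable def jNeg {X : Type*} [MeasurableSpace X] (μ : SignedMeasure X) : Measure X :=
  μ.toJordanDecomposition.negPart

/-- Membership in `AB` for signed measures. -/
def MemAB (m : Measure (SigmaA N A)) (μ : SignedMeasure (SigmaA N A × K)) : Prop :=
  MemABPair m (jPos μ) (jNeg μ)

/-- Membership in `S^∞` for signed measures. -/
def MemS (m : Measure (SigmaA N A)) (θ : ℝ) (μ : SignedMeasure (SigmaA N A × K)) : Prop :=
  MemSPair m θ (jPos μ) (jNeg μ)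

/-- `‖μ‖_∞` for signed measures. -/
noncomputable def infNorm (m : Measure (SigmaA N A))
    (μ : SignedMeasure (SigmaA N A × K)) : ℝ≥0∞ :=
  infNormPair m (jPos μ) (jNeg μ)

/-- `‖μ‖_{S^∞}` for signed measures. -/
noncomputable def sNorm (m : Measure (SigmaA N A)) (θ : ℝ)
    (μ : SignedMeasure (SigmaA N A × K)) : ℝ≥0∞ :=
  sNormPair m θ (jPos μ) (jNeg μ)

/-- `‖φ₁‖_∞` of the marginal density of a signed measure. -/
noncomputable def phiSup (m : Measure (SigmaA N A))
    (μ : SignedMeasure (SigmaA N A × K)) : ℝ≥0∞ :=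
  essSup (fun γ => ENNReal.ofReal |phiPair m (jPos μ) (jNeg μ) γ|) m

section NaturalExtension

open Filter Topology

instance instBorelFin : BorelSpace (Fin N) :=
  ⟨by
    rw [borel_eq_top_of_discrete]
    exact top_unique fun s _ => MeasurableSet.of_discrete⟩

instance instSecondCountableSigma : SecondCountableTopology (SigmaA N A) :=
  TopologicalSpace.Subtype.secondCountableTopology _

theorem shift_continuous : Continuous (shift : SigmaA N A → SigmaA N A) := by
  refine Continuous.subtype_mk (f := fun (x : SigmaA N A) (i : ℕ) => x.val (i + 1)) ?_ _
  exact continuous_pi fun i => (continuous_apply (i + 1)).comp continuous_subtype_val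

theorem pairMap_continuous (k : ℕ) :
    Continuous (fun ω : ℕ → SigmaA N A => (shift (ω (k + 1)), ω k)) := by
  have h := shift_continuous (N := N) (A := A)
  fun_prop

theorem isClosed_sigma :
    IsClosed {x : ℕ → Fin N | ∀ i, A (x i) (x (i + 1)) = true} := by
  have : {x : ℕ → Fin N | ∀ i, A (x i) (x (i + 1)) = true}
      = ⋂ i, {x : ℕ → Fin N | A (x i) (x (i + 1)) = true} := by
    ext x; simp
  rw [this]
  refine isClosed_iInter fun i => ?_
  have hc : Continuous fun x : ℕ → Fin N => (x i, x (i + 1)) := by fun_prop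
  exact (isClosed_discrete {p : Fin N × Fin N | A p.1 p.2 = true}).preimage hc

theorem compact_sigma : CompactSpace (SigmaA N A) :=
  isCompact_iff_compactSpace.mp (isClosed_sigma (A := A)).isCompact

/-- History map: `x` together with its forward images, up to order `n`. -/
def hist (n : ℕ) (x : SigmaA N A) : ℕ → SigmaA N A := fun k => shift^[n - k] x

theorem hist_continuous (n : ℕ) : Continuous (hist n : SigmaA N A → ℕ → SigmaA N A) :=
  continuous_pi fun _ => shift_continuous.iterate _

theorem map_iter (m : Measure (SigmaA N A)) (hminv : m.map shift = m) (n : ℕ) :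
    m.map (shift^[n]) = m := by
  induction n with
  | zero => simp
  | succ n ih =>
    rw [Function.iterate_succ, ← Measure.map_map (shift_continuous.iterate n).measurable
      shift_continuous.measurable, hminv, ih]

/-- Existence of a natural extension. -/
theorem exists_natExt (m : Measure (SigmaA N A)) [IsProbabilityMeasure m]
    (hminv : m.map shift = m) :
    ∃ L : Measure (ℕ → SigmaA N A), IsProbabilityMeasure L ∧
      (∀ k, L.map (fun ω => ω k) = m) ∧
      (∀ k, ∀ᵐ ω ∂L, shift (ω (k + 1)) = ω k) := by
  have := compact_sigma (A := A)
  let Ln : ℕ → ProbabilityMeasure (ℕ → SigmaA N A) := fun n =>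
    ⟨m.map (hist n), Measure.isProbabilityMeasure_map (hist_continuous n).measurable.aemeasurable⟩
  let U : Ultrafilter (ProbabilityMeasure (ℕ → SigmaA N A)) := (hyperfilter ℕ).map Ln
  obtain ⟨L, -, hL⟩ := isCompact_univ.ultrafilter_le_nhds U (by simp)
  have hT : Tendsto Ln (hyperfilter ℕ) (𝓝 L) := hL
  have key : ∀ k, (L : Measure (ℕ → SigmaA N A)).map (fun ω => (shift (ω (k + 1)), ω k))
      = m.map (fun x => (x, x)) := by
    intro k
    have hc : Continuous (fun ω : ℕ → SigmaA N A => (shift (ω (k + 1)), ω k)) :=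
      pairMap_continuous k
    have hd : Continuous (fun x : SigmaA N A => (x, x)) := by fun_prop
    have h1 := ProbabilityMeasure.tendsto_map_of_tendsto_of_continuous Ln L hT hc
    let Q : ProbabilityMeasure (SigmaA N A × SigmaA N A) :=
      ⟨m.map (fun x => (x, x)), Measure.isProbabilityMeasure_map hd.measurable.aemeasurable⟩
    have h2 : Tendsto (fun i => (Ln i).map hc.measurable.aemeasurable) (hyperfilter ℕ) (𝓝 Q) := by
      refine tendsto_const_nhds.congr' ?_
      have : ∀ᶠ n in (hyperfilter ℕ : Filter ℕ), k + 1 ≤ n :=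
        (Nat.hyperfilter_le_atTop) (eventually_ge_atTop (k + 1))
      filter_upwards [this] with n hn
      apply Subtype.ext
      change m.map (fun x => (x, x)) = (m.map (hist n)).map _
      rw [Measure.map_map hc.measurable (hist_continuous n).measurable]
      conv_lhs => rw [← map_iter m hminv (n - k)]
      rw [Measure.map_map hd.measurable (shift_continuous.iterate _).measurable]
      congr 1
      ext1 x
      simp only [Function.comp, hist]
      rw [← Function.iterate_succ_apply' shift]
      congr 2
      omega
    have h3 := tendsto_nhds_unique h1 h2
    exact congrArg Subtype.val h3
  refine ⟨L, inferInstance, fun k => ?_, fun k => ?_⟩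
  · have := congrArg (Measure.map Prod.snd) (key k)
    rw [Measure.map_map measurable_snd, Measure.map_map measurable_snd (by fun_prop)] at this
    · simpa [Function.comp_def] using this
    · exact (pairMap_continuous k).measurable
  · have hm : Measurable (fun ω : ℕ → SigmaA N A => (shift (ω (k + 1)), ω k)) :=
      (pairMap_continuous k).measurable
    have hs : MeasurableSet {p : SigmaA N A × SigmaA N A | p.1 = p.2} :=
      measurableSet_eq_fun measurable_fst measurable_snd
    have : ∀ᵐ p ∂((L : Measure (ℕ → SigmaA N A)).map
        (fun ω => (shift (ω (k + 1)), ω k))), p.1 = p.2 := by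
      rw [key k, ae_map_iff (by fun_prop) hs]
      simp
    exact (ae_map_iff hm.aemeasurable hs).mp this

/-- Left shift on histories. -/
def lsh (ω : ℕ → SigmaA N A) : ℕ → SigmaA N A := fun k => ω (k + 1)

theorem lsh_measurable : Measurable (lsh : (ℕ → SigmaA N A) → ℕ → SigmaA N A) :=
  measurable_pi_lambda _ fun k => measurable_pi_apply (k + 1)

theorem restrict_natExt (m : Measure (SigmaA N A))
    (L : Measure (ℕ → SigmaA N A))
    (h1 : ∀ k, L.map (fun ω => ω k) = m)
    (h2 : ∀ k, ∀ᵐ ω ∂L, shift (ω (k + 1)) = ω k) (I : Finset ℕ) :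
    L.map I.restrict = m.map (I.restrict ∘ hist (I.sup id)) := by
  set k := I.sup id with hk
  have hae : (I.restrict : (ℕ → SigmaA N A) → _) =ᵐ[L]
      (I.restrict ∘ hist k) ∘ (fun ω : ℕ → SigmaA N A => ω k) := by
    filter_upwards [ae_all_iff.mpr h2] with ω hω
    have hit : ∀ n j, shift^[n] (ω (j + n)) = ω j := by
      intro n
      induction n with
      | zero => intro j; rfl
      | succ n ih =>
        intro j
        rw [Function.iterate_succ_apply, ← add_assoc, hω, ih]
    funext i
    have hi : (i : ℕ) ≤ k := Finset.le_sup (f := id) i.2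
    have := hit (k - i) i
    rw [Nat.add_sub_cancel' hi] at this
    simpa [hist] using this.symm
  rw [Measure.map_congr hae, ← Measure.map_map, h1]
  · exact (Finset.measurable_restrict I).comp (hist_continuous k).measurable
  · exact measurable_pi_apply k

theorem stationary_natExt (m : Measure (SigmaA N A)) [IsProbabilityMeasure m]
    (L : Measure (ℕ → SigmaA N A)) [IsProbabilityMeasure L]
    (h1 : ∀ k, L.map (fun ω => ω k) = m)
    (h2 : ∀ k, ∀ᵐ ω ∂L, shift (ω (k + 1)) = ω k) : L.map lsh = L := by
  have a1 : ∀ k, (L.map lsh).map (fun ω => ω k) = m := by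
    intro k
    rw [Measure.map_map (measurable_pi_apply k) lsh_measurable]
    exact h1 (k + 1)
  have a2 : ∀ k, ∀ᵐ ω ∂(L.map lsh), shift (ω (k + 1)) = ω k := by
    intro k
    have hs : MeasurableSet {ω : ℕ → SigmaA N A | shift (ω (k + 1)) = ω k} :=
      measurableSet_eq_fun (shift_continuous.measurable.comp (measurable_pi_apply _))
        (measurable_pi_apply _)
    rw [ae_map_iff lsh_measurable.aemeasurable hs]
    exact h2 (k + 1)
  have b1 : IsProjectiveLimit (L.map lsh)
      (fun I : Finset ℕ => m.map (I.restrict ∘ hist (I.sup id))) :=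
    fun I => restrict_natExt m _ a1 a2 I
  have b2 : IsProjectiveLimit L
      (fun I : Finset ℕ => m.map (I.restrict ∘ hist (I.sup id))) :=
    fun I => restrict_natExt m _ h1 h2 I
  have : ∀ I : Finset ℕ, IsFiniteMeasure
      (m.map ((I.restrict : (ℕ → SigmaA N A) → _) ∘ hist (I.sup id))) := fun I => inferInstance
  exact b1.unique b2

/-- Approximate fibre coordinate. -/
def approxZ (G : SigmaA N A × K → K) (z : K) : ℕ → (ℕ → SigmaA N A) → K
  | 0, _ => z
  | n + 1, ω => G (ω 1, approxZ G z n (lsh ω))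

theorem exists_invariant (m : Measure (SigmaA N A)) [IsProbabilityMeasure m]
    (hminv : m.map shift = m)
    (hdiam : Metric.diam (Set.univ : Set K) = 1)
    (G : SigmaA N A × K → K) (hG : Measurable G)
    (α : ℝ) (hα0 : 0 < α) (hα1 : α < 1) (hG1 : CondG1 G α) :
    ∃ M : Measure (SigmaA N A × K), IsProbabilityMeasure M ∧ M.map (skew G) = M ∧
      M.map Prod.fst = m := by
  obtain ⟨L, hLp, h1, h2⟩ := exists_natExt m hminv
  have hst := stationary_natExt m L h1 h2
  obtain ⟨z⟩ := ‹Nonempty K›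
  have hd1 : ∀ a b : K, dist a b ≤ 1 := fun a b => by
    rw [← hdiam]
    exact Metric.dist_le_diam_of_mem isCompact_univ.isBounded (mem_univ _) (mem_univ _)
  have hstep : ∀ n (ω : ℕ → SigmaA N A),
      dist (approxZ G z n ω) (approxZ G z (n + 1) ω) ≤ 1 * α ^ n := by
    intro n
    induction n with
    | zero => intro ω; simpa using hd1 _ _
    | succ n ih =>
      intro ω
      change dist (G (ω 1, approxZ G z n (lsh ω))) (G (ω 1, approxZ G z (n + 1) (lsh ω))) ≤ _
      refine (hG1 _ _ _).trans ?_
      have := mul_le_mul_of_nonneg_left (ih (lsh ω)) hα0.le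
      rw [pow_succ]; linarith
  have hlim : ∀ ω : ℕ → SigmaA N A, ∃ y, Tendsto (fun n => approxZ G z n ω) atTop (𝓝 y) :=
    fun ω => cauchySeq_tendsto_of_complete
      (cauchySeq_of_le_geometric α 1 hα1 (fun n => hstep n ω))
  choose Z hZ using hlim
  have hmeas : ∀ n, Measurable (approxZ G z n : (ℕ → SigmaA N A) → K) := by
    intro n
    induction n with
    | zero => exact measurable_const
    | succ n ih => exact hG.comp ((measurable_pi_apply 1).prodMk (ih.comp lsh_measurable))
  have hZm : Measurable Z := measurable_of_tendsto_metrizable hmeas (tendsto_pi_nhds.mpr hZ)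
  have hZeq : ∀ ω, G (ω 1, Z (lsh ω)) = Z ω := by
    intro ω
    have hc : Continuous fun w => G (ω 1, w) :=
      (LipschitzWith.of_dist_le_mul (K := ⟨α, hα0.le⟩) (fun a b => hG1 (ω 1) a b)).continuous
    have t1 : Tendsto (fun n => G (ω 1, approxZ G z n (lsh ω))) atTop (𝓝 (G (ω 1, Z (lsh ω)))) :=
      (hc.tendsto _).comp (hZ (lsh ω))
    have t2 : Tendsto (fun n => approxZ G z (n + 1) ω) atTop (𝓝 (Z ω)) :=
      (tendsto_add_atTop_iff_nat 1).mpr (hZ ω)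
    exact tendsto_nhds_unique t1 t2
  have hpm : Measurable (fun ω : ℕ → SigmaA N A => (ω 0, Z ω)) :=
    (measurable_pi_apply 0).prodMk hZm
  have hskew : Measurable (skew G) :=
    (shift_continuous.measurable.comp measurable_fst).prodMk hG
  refine ⟨L.map (fun ω => (ω 0, Z ω)), Measure.isProbabilityMeasure_map hpm.aemeasurable, ?_, ?_⟩
  · rw [Measure.map_map hskew hpm]
    conv_lhs => rw [← hst]
    rw [Measure.map_map (hskew.comp hpm) lsh_measurable]
    apply Measure.map_congr
    filter_upwards [h2 0] with ω hω
    have := hZeq ω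
    simp only [Function.comp, skew]
    exact Prod.ext hω (hZeq ω)
  · rw [Measure.map_map measurable_fst hpm]
    exact h1 0

end NaturalExtension


set_option linter.unusedSectionVars false

theorem integral_rnDeriv_mul' {X : Type*} [MeasurableSpace X] {μ ν : Measure X}
    [μ.HaveLebesgueDecomposition ν] [SigmaFinite μ] (hμν : μ ≪ ν) {f : X → ℝ} :
    ∫ x, (μ.rnDeriv ν x).toReal * f x ∂ν = ∫ x, f x ∂μ := integral_rnDeriv_smul hμν

section SignedInt

/-- Bounded measurable functions. -/
def BM {X : Type*} [MeasurableSpace X] (h : X → ℝ) : Prop :=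
  Measurable h ∧ ∃ C, ∀ x, |h x| ≤ C

theorem BM.integrable {X : Type*} [MeasurableSpace X] {h : X → ℝ} (hh : BM h)
    (μ : Measure X) [IsFiniteMeasure μ] : Integrable h μ := by
  obtain ⟨hm, C, hC⟩ := hh
  exact Integrable.of_bound hm.aestronglyMeasurable C (Filter.Eventually.of_forall hC)

theorem BM.mul {X : Type*} [MeasurableSpace X] {f g : X → ℝ} (hf : BM f) (hg : BM g) :
    BM (fun x => f x * g x) := by
  obtain ⟨hf, C, hC⟩ := hf
  obtain ⟨hg, C', hC'⟩ := hg
  refine ⟨hf.mul hg, C * C', fun x => ?_⟩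
  rw [abs_mul]
  exact mul_le_mul (hC x) (hC' x) (abs_nonneg _) ((abs_nonneg _).trans (hC x))

theorem BM.comp {X Y : Type*} [MeasurableSpace X] [MeasurableSpace Y] {f : Y → ℝ} (hf : BM f)
    {g : X → Y} (hg : Measurable g) : BM (fun x => f (g x)) :=
  ⟨hf.1.comp hg, hf.2.imp fun _ h x => h (g x)⟩

/-- Integral against a signed measure. -/
noncomputable def sInt {X : Type*} [MeasurableSpace X] (ν : SignedMeasure X) (h : X → ℝ) : ℝ :=
  ∫ x, h x ∂(jPos ν) - ∫ x, h x ∂(jNeg ν)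

variable {X Y : Type*} [MeasurableSpace X] [MeasurableSpace Y]

instance instFinPos (ν : SignedMeasure X) : IsFiniteMeasure (jPos ν) :=
  ν.toJordanDecomposition.posPart_finite

instance instFinNeg (ν : SignedMeasure X) : IsFiniteMeasure (jNeg ν) :=
  ν.toJordanDecomposition.negPart_finite

theorem signed_apply (ν : SignedMeasure X) {E : Set X} (hE : MeasurableSet E) :
    ν E = (jPos ν).real E - (jNeg ν).real E :=
  ν.apply_eq_posPart_real_sub_negPart_real hE

theorem sInt_eq (ν : SignedMeasure X) (μ₁ μ₂ : Measure X) [IsFiniteMeasure μ₁]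
    [IsFiniteMeasure μ₂] (h : ∀ E, MeasurableSet E → ν E = μ₁.real E - μ₂.real E)
    {f : X → ℝ} (hf : BM f) : sInt ν f = ∫ x, f x ∂μ₁ - ∫ x, f x ∂μ₂ := by
  have key : jPos ν + μ₂ = jNeg ν + μ₁ := by
    ext E hE
    have h1 := h E hE
    rw [signed_apply ν hE] at h1
    rw [← ENNReal.toReal_eq_toReal_iff' (measure_ne_top _ _) (measure_ne_top _ _)]
    change (jPos ν + μ₂).real E = (jNeg ν + μ₁).real E
    rw [measureReal_add_apply, measureReal_add_apply]
    linarith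
  have := congrArg (fun μ => ∫ x, f x ∂μ) key
  rw [integral_add_measure (hf.integrable _) (hf.integrable _),
    integral_add_measure (hf.integrable _) (hf.integrable _)] at this
  unfold sInt
  linarith

theorem sInt_map (ν : SignedMeasure X) {F : X → Y} (hF : Measurable F) {f : Y → ℝ} (hf : BM f) :
    sInt (ν.map F) f = sInt ν (fun x => f (F x)) := by
  rw [sInt_eq (ν.map F) ((jPos ν).map F) ((jNeg ν).map F) _ hf,
    integral_map hF.aemeasurable hf.1.aestronglyMeasurable,
    integral_map hF.aemeasurable hf.1.aestronglyMeasurable, sInt]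
  intro E hE
  rw [VectorMeasure.map_apply _ hF hE, signed_apply ν (hF hE), map_measureReal_apply hF hE,
    map_measureReal_apply hF hE]

theorem sInt_sub_smul (ν : SignedMeasure X) (M : Measure X) [IsFiniteMeasure M] (c : ℝ)
    {f : X → ℝ} (hf : BM f) :
    sInt (ν - c • M.toSignedMeasure) f = sInt ν f - c * ∫ x, f x ∂M := by
  have hc : c = (c.toNNReal : ℝ) - ((-c).toNNReal : ℝ) := by
    simp
  rw [sInt_eq _ (jPos ν + (-c).toNNReal • M) (jNeg ν + c.toNNReal • M) _ hf,
    integral_add_measure (hf.integrable _) (hf.integrable _),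
    integral_add_measure (hf.integrable _) (hf.integrable _),
    integral_smul_nnreal_measure, integral_smul_nnreal_measure, sInt]
  · simp only [NNReal.smul_def, smul_eq_mul]
    conv_rhs => rw [hc]
    ring
  · intro E hE
    rw [measureReal_add_apply, measureReal_add_apply, sub_apply,
      smul_apply, signed_apply ν hE, Measure.toSignedMeasure_apply_measurable hE,
      measureReal_nnreal_smul_apply, measureReal_nnreal_smul_apply]
    simp only [smul_eq_mul]
    conv_lhs => rw [hc]
    ring

/-- Absolute continuity of the first marginal (of the total variation). -/
def SAC (m : Measure X) (ν : SignedMeasure (X × Y)) : Prop :=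
  ∀ E, MeasurableSet E → ∀ B, MeasurableSet B → m B = 0 → E ⊆ Prod.fst ⁻¹' B → ν E = 0

theorem SAC.pos {m : Measure X} {ν : SignedMeasure (X × Y)} (h : SAC m ν) :
    (jPos ν).fst ≪ m := by
  refine Measure.AbsolutelyContinuous.mk fun B hB hm => ?_
  obtain ⟨i, hi₁, hi₂, hi₃, hpos, hneg⟩ := ν.toJordanDecomposition_spec
  rw [Measure.fst_apply hB, jPos, hpos,
    SignedMeasure.toMeasureOfZeroLE_apply _ _ _ (measurable_fst hB)]
  simp [h (i ∩ Prod.fst ⁻¹' B) (hi₁.inter (measurable_fst hB)) B hB hm inter_subset_right]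

theorem SAC.neg {m : Measure X} {ν : SignedMeasure (X × Y)} (h : SAC m ν) :
    (jNeg ν).fst ≪ m := by
  refine Measure.AbsolutelyContinuous.mk fun B hB hm => ?_
  obtain ⟨i, hi₁, hi₂, hi₃, hpos, hneg⟩ := ν.toJordanDecomposition_spec
  rw [Measure.fst_apply hB, jNeg, hneg,
    SignedMeasure.toMeasureOfLEZero_apply _ _ _ (measurable_fst hB)]
  simp [h (iᶜ ∩ Prod.fst ⁻¹' B) (hi₁.compl.inter (measurable_fst hB)) B hB hm inter_subset_right]

theorem SAC.mk' {m : Measure X} {ν : SignedMeasure (X × Y)} (h1 : (jPos ν).fst ≪ m)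
    (h2 : (jNeg ν).fst ≪ m) : SAC m ν := by
  intro E hE B hB hm hEB
  have a1 := h1 hm
  have a2 := h2 hm
  rw [Measure.fst_apply hB] at a1 a2
  rw [signed_apply ν hE, measureReal_def, measureReal_def, measure_mono_null hEB a1,
    measure_mono_null hEB a2, sub_self]

end SignedInt

section Fiber

theorem phi_sInt {m : Measure (SigmaA N A)} [IsProbabilityMeasure m]
    {ν : SignedMeasure (SigmaA N A × K)} (h : SAC m ν) {f : SigmaA N A → ℝ} (hf : BM f) :
    sInt ν (fun p => f p.1) = ∫ x, phiPair m (jPos ν) (jNeg ν) x * f x ∂m := by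
  have key : ∀ (μ : Measure (SigmaA N A × K)) [IsFiniteMeasure μ], μ.fst ≪ m →
      ∫ p, f p.1 ∂μ = ∫ x, (μ.fst.rnDeriv m x).toReal * f x ∂m := by
    intro μ _ hμ
    rw [integral_rnDeriv_mul' hμ, Measure.fst,
      integral_map measurable_fst.aemeasurable hf.1.aestronglyMeasurable]
  have hfin_int : ∀ (μ : Measure (SigmaA N A × K)) [IsFiniteMeasure μ],
      Integrable (fun x => (μ.fst.rnDeriv m x).toReal * f x) m := by
    intro μ _
    obtain ⟨hm, C, hC⟩ := hf
    exact Measure.integrable_toReal_rnDeriv.mul_bdd (c := C) hm.aestronglyMeasurable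
      (Filter.Eventually.of_forall hC)
  rw [sInt, key _ h.pos, key _ h.neg, ← integral_sub (hfin_int _) (hfin_int _)]
  congr 1
  ext x
  simp only [phiPair]
  ring

theorem phi_integrable (m : Measure (SigmaA N A)) 
    (ν : SignedMeasure (SigmaA N A × K)) : Integrable (phiPair m (jPos ν) (jNeg ν)) m :=
  Measure.integrable_toReal_rnDeriv.sub Measure.integrable_toReal_rnDeriv

theorem BM_indicator {X : Type*} [MeasurableSpace X] {B : Set X} (hB : MeasurableSet B) :
    BM (B.indicator (fun _ => (1 : ℝ))) := by
  refine ⟨measurable_const.indicator hB, 1, fun x => ?_⟩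
  by_cases h : x ∈ B <;> simp [h]

theorem sInt_indicator {X : Type*} [MeasurableSpace X] (ν : SignedMeasure X) {B : Set X}
    (hB : MeasurableSet B) : sInt ν (B.indicator (fun _ => (1 : ℝ))) = ν B := by
  rw [sInt, signed_apply ν hB, integral_indicator_const _ hB, integral_indicator_const _ hB]
  simp

theorem phi_set {m : Measure (SigmaA N A)} [IsProbabilityMeasure m]
    {ν : SignedMeasure (SigmaA N A × K)} (h : SAC m ν) {B : Set (SigmaA N A)}
    (hB : MeasurableSet B) :
    ν (Prod.fst ⁻¹' B) = ∫ x in B, phiPair m (jPos ν) (jNeg ν) x ∂m := by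
  rw [← sInt_indicator ν (measurable_fst hB)]
  have := phi_sInt h (BM_indicator hB)
  rw [← integral_indicator hB]
  refine Eq.trans ?_ (this.trans ?_)
  · rfl
  · congr 1
    ext x
    by_cases hx : x ∈ B <;> simp [hx]

theorem phi_ae {m : Measure (SigmaA N A)} [IsProbabilityMeasure m]
    {ν : SignedMeasure (SigmaA N A × K)} (h : SAC m ν) {φ : SigmaA N A → ℝ}
    (hφ : Integrable φ m)
    (he : ∀ B, MeasurableSet B → ν (Prod.fst ⁻¹' B) = ∫ x in B, φ x ∂m) :
    φ =ᵐ[m] phiPair m (jPos ν) (jNeg ν) := by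
  refine hφ.ae_eq_of_forall_setIntegral_eq _ _ (phi_integrable m ν) fun B hB _ => ?_
  rw [← he B hB, phi_set h hB]

/-- The fibre integral. -/
theorem fiber_integral {m : Measure (SigmaA N A)} [IsProbabilityMeasure m]
    {μ : Measure (SigmaA N A × K)} [hfin : IsFiniteMeasure μ] (hμ : μ.fst ≪ m)
    {u : SigmaA N A × K → ℝ} (hu : BM u) :
    ∫ p, u p ∂μ = ∫ γ, (∫ z, u (γ, z) ∂(fiberR m μ γ)) ∂m ∧
    Integrable (fun γ => ∫ z, u (γ, z) ∂(fiberR m μ γ)) m := by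
  have hdef : ∀ γ, fiberR m μ γ = (μ.fst.rnDeriv m γ) • μ.condKernel γ := by
    intro γ
    simp [fiberR, hfin]
  have hval : ∀ γ, ∫ z, u (γ, z) ∂(fiberR m μ γ) =
      (μ.fst.rnDeriv m γ).toReal * ∫ z, u (γ, z) ∂(μ.condKernel γ) := by
    intro γ
    rw [hdef, integral_smul_measure, smul_eq_mul]
  simp_rw [hval]
  constructor
  · rw [integral_rnDeriv_mul' hμ, Measure.integral_condKernel (hu.integrable μ)]
  · obtain ⟨hm, C, hC⟩ := hu
    have hsm : StronglyMeasurable fun γ => ∫ z, u (γ, z) ∂(μ.condKernel γ) :=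
      (hm.stronglyMeasurable.comp_measurable measurable_id).integral_kernel_prod_right'
    refine Measure.integrable_toReal_rnDeriv.mul_bdd (c := C) hsm.aestronglyMeasurable
      (Filter.Eventually.of_forall fun γ => ?_)
    refine (norm_integral_le_of_norm_le_const (Filter.Eventually.of_forall fun z => hC _)).trans ?_
    simp

theorem fiber_finite (m : Measure (SigmaA N A)) [IsProbabilityMeasure m]
    (μ : Measure (SigmaA N A × K)) [hfin : IsFiniteMeasure μ] :
    ∀ᵐ γ ∂m, IsFiniteMeasure (fiberR m μ γ) := by
  filter_upwards [Measure.rnDeriv_lt_top μ.fst m] with γ hγ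
  have hdef : fiberR m μ γ = (μ.fst.rnDeriv m γ) • μ.condKernel γ := by
    simp [fiberR, hfin]
  rw [hdef]
  refine ⟨?_⟩
  simpa using hγ

/-- Dual form of the bound `‖ν‖_∞ ≤ B`. -/
def Bd (m : Measure (SigmaA N A)) (ν : SignedMeasure (SigmaA N A × K)) (B : ℝ) : Prop :=
  ∀ f : SigmaA N A → ℝ, BM f → (∀ x, 0 ≤ f x) → ∀ u : SigmaA N A × K → ℝ, Measurable u →
    (∀ p, |u p| ≤ 1) → (∀ x, LipschitzWith 1 fun z => u (x, z)) →
    |sInt ν (fun p => f p.1 * u p)| ≤ B * ∫ x, f x ∂m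

theorem Bd_of_infNorm {m : Measure (SigmaA N A)} [IsProbabilityMeasure m]
    {ν : SignedMeasure (SigmaA N A × K)} (h : SAC m ν) {B : ℝ} (hB : 0 ≤ B)
    (hinf : infNorm m ν ≤ ENNReal.ofReal B) : Bd m ν B := by
  intro f hf hf0 u hum hu1 hul
  have hfu : BM (fun p : SigmaA N A × K => f p.1 * u p) :=
    (hf.comp measurable_fst).mul ⟨hum, 1, hu1⟩
  obtain ⟨e1, i1⟩ := fiber_integral h.pos hfu
  obtain ⟨e2, i2⟩ := fiber_integral h.neg hfu
  rw [sInt, e1, e2, ← integral_sub i1 i2, ← integral_const_mul, ← Real.norm_eq_abs]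
  refine norm_integral_le_of_norm_le ((hf.integrable m).const_mul B) ?_
  have hae : ∀ᵐ γ ∂m, wDist (fiberR m (jPos ν) γ) (fiberR m (jNeg ν) γ) ≤ ENNReal.ofReal B := by
    filter_upwards [ENNReal.ae_le_essSup
      (fun γ => wDist (fiberR m (jPos ν) γ) (fiberR m (jNeg ν) γ))] with γ hγ
    exact hγ.trans hinf
  filter_upwards [hae] with γ hγ
  rw [integral_const_mul, integral_const_mul, ← mul_sub, norm_mul, Real.norm_eq_abs,
    abs_of_nonneg (hf0 γ), mul_comm B]
  refine mul_le_mul_of_nonneg_left ?_ (hf0 γ)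
  rw [Real.norm_eq_abs, ← ENNReal.ofReal_le_ofReal_iff hB]
  refine le_trans ?_ hγ
  exact le_iSup (fun g : {g : K → ℝ // LipschitzWith 1 g ∧ ∀ z, |g z| ≤ 1} =>
    ENNReal.ofReal |∫ z, g.val z ∂(fiberR m (jPos ν) γ) - ∫ z, g.val z ∂(fiberR m (jNeg ν) γ)|)
    ⟨fun z => u (γ, z), hul γ, fun z => hu1 _⟩

theorem infNorm_of_Bd {m : Measure (SigmaA N A)} [IsProbabilityMeasure m]
    {ν : SignedMeasure (SigmaA N A × K)} (h : SAC m ν) {B : ℝ} (hBd : Bd m ν B) :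
    infNorm m ν ≤ ENNReal.ofReal B := by
  let S : Set C(K, ℝ) := {g | LipschitzWith 1 g ∧ ∀ z, |g z| ≤ 1}
  obtain ⟨D, hDc, hDd⟩ := TopologicalSpace.exists_countable_dense S
  have hone : ∀ g : S, ∀ᵐ γ ∂m, |∫ z, g.val z ∂(fiberR m (jPos ν) γ)
      - ∫ z, g.val z ∂(fiberR m (jNeg ν) γ)| ≤ B := by
    intro g
    have hgm : Measurable g.val := g.val.continuous.measurable
    have hgb : BM (fun p : SigmaA N A × K => g.val p.2) :=
      ⟨hgm.comp measurable_snd, 1, fun p => g.2.2 _⟩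
    obtain ⟨-, i1⟩ := fiber_integral h.pos hgb
    obtain ⟨-, i2⟩ := fiber_integral h.neg hgb
    have hset : ∀ E, MeasurableSet E → |∫ γ in E, (∫ z, g.val z ∂(fiberR m (jPos ν) γ)
        - ∫ z, g.val z ∂(fiberR m (jNeg ν) γ)) ∂m| ≤ ∫ γ in E, B ∂m := by
      intro E hE
      have hfu : BM (fun p : SigmaA N A × K =>
          E.indicator (fun _ => (1 : ℝ)) p.1 * g.val p.2) :=
        ((BM_indicator hE).comp measurable_fst).mul hgb
      have := hBd _ (BM_indicator hE) (fun x => indicator_nonneg (fun _ _ => zero_le_one) x)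
        (fun p => g.val p.2) hgb.1 (fun p => g.2.2 _) (fun x => g.2.1)
      obtain ⟨e1, j1⟩ := fiber_integral h.pos hfu
      obtain ⟨e2, j2⟩ := fiber_integral h.neg hfu
      rw [sInt, e1, e2, ← integral_sub j1 j2, integral_indicator_const _ hE] at this
      rw [← integral_indicator hE, setIntegral_const]
      refine le_of_eq_of_le ?_ (this.trans_eq ?_)
      · congr 2
        ext γ
        simp only [integral_const_mul]
        by_cases hγ : γ ∈ E <;> simp [hγ]
      · simp [mul_comm]
    have a1 := ae_le_of_forall_setIntegral_le (i1.sub i2) (integrable_const B)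
      (fun E hE _ => (le_abs_self _).trans (hset E hE))
    have a2 := ae_le_of_forall_setIntegral_le (integrable_const (-B)) (i1.sub i2)
      (fun E hE _ => by
        have := (abs_le.mp (hset E hE)).1
        rw [integral_neg]
        exact this)
    filter_upwards [a1, a2] with γ h1 h2
    exact abs_le.mpr ⟨h2, h1⟩
  have hall := (ae_ball_iff hDc).mpr (fun g _ => hone g)
  refine essSup_le_of_ae_le _ ?_
  filter_upwards [hall, fiber_finite m (jPos ν), fiber_finite m (jNeg ν)] with γ hγ f1 f2
  refine iSup_le fun g => ENNReal.ofReal_le_ofReal ?_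
  have hcont : ∀ (κ : Measure K) [IsFiniteMeasure κ],
      Continuous fun g : S => ∫ z, g.val z ∂κ := by
    intro κ _
    refine continuous_of_dominated (F := fun (g : S) z => g.val z) (bound := fun _ => 1) ?_ ?_
      (integrable_const 1) ?_
    · exact fun g => g.val.continuous.measurable.aestronglyMeasurable
    · exact fun g => Filter.Eventually.of_forall fun z => g.2.2 z
    · exact Filter.Eventually.of_forall fun z =>
        (continuous_eval_const z).comp continuous_subtype_val
  have hcl : IsClosed {g : S | |∫ z, g.val z ∂(fiberR m (jPos ν) γ)
      - ∫ z, g.val z ∂(fiberR m (jNeg ν) γ)| ≤ B} :=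
    isClosed_le ((hcont _).sub (hcont _)).abs continuous_const
  have hmem : (⟨⟨g.val, g.2.1.continuous⟩, g.2⟩ : S) ∈ closure D := hDd _
  exact hcl.closure_subset_iff.mpr (fun g hg => hγ g hg) hmem

end Fiber


section Lip

theorem dTheta_term_nonneg {θ : ℝ} (h0 : 0 < θ) (x y : SigmaA N A) (i : ℕ) :
    0 ≤ θ ^ i * (if x.val i = y.val i then (0 : ℝ) else 1) := by
  split_ifs <;> positivity

theorem dTheta_term_le {θ : ℝ} (h0 : 0 < θ) (x y : SigmaA N A) (i : ℕ) :
    θ ^ i * (if x.val i = y.val i then (0 : ℝ) else 1) ≤ θ ^ i := by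
  have := pow_pos h0 i
  split_ifs <;> simp [this.le]

theorem dTheta_summable {θ : ℝ} (h0 : 0 < θ) (h1 : θ < 1) (x y : SigmaA N A) :
    Summable fun i : ℕ => θ ^ i * (if x.val i = y.val i then (0 : ℝ) else 1) :=
  Summable.of_nonneg_of_le (dTheta_term_nonneg h0 x y) (dTheta_term_le h0 x y)
    (summable_geometric_of_lt_one h0.le h1)

theorem dTheta_nonneg {θ : ℝ} (h0 : 0 < θ) (x y : SigmaA N A) : 0 ≤ dTheta θ x y :=
  tsum_nonneg (dTheta_term_nonneg h0 x y)

theorem dTheta_le {θ : ℝ} (h0 : 0 < θ) (h1 : θ < 1) (x y : SigmaA N A) :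
    dTheta θ x y ≤ (1 - θ)⁻¹ := by
  rw [← tsum_geometric_of_lt_one h0.le h1]
  exact (dTheta_summable h0 h1 x y).tsum_le_tsum (dTheta_term_le h0 x y)
    (summable_geometric_of_lt_one h0.le h1)

theorem dTheta_pos {θ : ℝ} (h0 : 0 < θ) (h1 : θ < 1) {x y : SigmaA N A} (hxy : x ≠ y) :
    0 < dTheta θ x y := by
  have : ∃ i, x.val i ≠ y.val i := by
    by_contra hcon
    push Not at hcon
    exact hxy (Subtype.ext (funext hcon))
  obtain ⟨i, hi⟩ := this
  refine (dTheta_summable h0 h1 x y).tsum_pos (dTheta_term_nonneg h0 x y) i ?_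
  simp [hi, h0]

theorem dTheta_self (θ : ℝ) (x : SigmaA N A) : dTheta θ x x = 0 := by
  simp [dTheta]

theorem dTheta_continuous {θ : ℝ} (h0 : 0 < θ) (h1 : θ < 1) (y : SigmaA N A) :
    Continuous fun x => dTheta θ x y := by
  refine continuous_tsum (u := fun i => θ ^ i) (fun i => ?_)
    (summable_geometric_of_lt_one h0.le h1) (fun i x => ?_)
  · have hc : Continuous fun x : SigmaA N A => x.val i :=
      (continuous_apply i).comp continuous_subtype_val
    have hd : Continuous fun a : Fin N => (if a = y.val i then (0 : ℝ) else 1) :=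
      continuous_of_discreteTopology
    exact continuous_const.mul (hd.comp hc)
  · rw [Real.norm_of_nonneg (dTheta_term_nonneg h0 x y i)]
    exact dTheta_term_le h0 x y i

theorem LipD.cont {θ : ℝ} (h0 : 0 < θ) (h1 : θ < 1) {φ : SigmaA N A → ℝ}
    (h : LipD (dTheta θ) φ) : Continuous φ := by
  obtain ⟨L, hL⟩ := h
  rw [continuous_iff_continuousAt]
  intro y
  rw [ContinuousAt, tendsto_iff_dist_tendsto_zero]
  have ht : Filter.Tendsto (fun x => L * dTheta θ x y) (nhds y) (nhds 0) := by
    have := ((dTheta_continuous h0 h1 y).tendsto y).const_mul L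
    rwa [dTheta_self, mul_zero] at this
  exact squeeze_zero (fun _ => dist_nonneg) (fun x => hL x y) ht

theorem LipD.lt_top {θ : ℝ} (h0 : 0 < θ) (h1 : θ < 1) {φ : SigmaA N A → ℝ}
    (h : LipD (dTheta θ) φ) : thetaNorm (dTheta θ) φ < ⊤ := by
  obtain ⟨L, hL⟩ := h
  have hLa : ∀ x y, |φ x - φ y| ≤ |L| * dTheta θ x y := fun x y =>
    (hL x y).trans (mul_le_mul_of_nonneg_right (le_abs_self L) (dTheta_nonneg h0 x y))
  refine ENNReal.add_lt_top.mpr ⟨?_, ?_⟩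
  · rcases isEmpty_or_nonempty (SigmaA N A) with he | ⟨⟨x0⟩⟩
    · simp [supNormE]
    · refine lt_of_le_of_lt (iSup_le (a := ENNReal.ofReal (|φ x0| + |L| * (1 - θ)⁻¹))
        fun x => ENNReal.ofReal_le_ofReal ?_) ENNReal.ofReal_lt_top
      have a := hLa x x0
      have b := mul_le_mul_of_nonneg_left (dTheta_le h0 h1 x x0) (abs_nonneg L)
      have c := abs_sub_abs_le_abs_sub (φ x) (φ x0)
      linarith
  · refine lt_of_le_of_lt (iSup₂_le (a := ENNReal.ofReal |L|)
        fun x y => ENNReal.ofReal_le_ofReal ?_) ENNReal.ofReal_lt_top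
    exact div_le_of_le_mul₀ (dTheta_nonneg h0 x y) (abs_nonneg L) (hLa x y)

theorem abs_le_thetaNorm {θ : ℝ} {φ : SigmaA N A → ℝ} {t : ℝ} (ht : 0 ≤ t)
    (h : thetaNorm (dTheta θ) φ ≤ ENNReal.ofReal t) (x : SigmaA N A) : |φ x| ≤ t := by
  rw [← ENNReal.ofReal_le_ofReal_iff ht]
  exact (le_iSup (fun x => ENNReal.ofReal |φ x|) x).trans (le_self_add.trans h)

theorem LipD_of_lt_top {θ : ℝ} (h0 : 0 < θ) (h1 : θ < 1) {φ : SigmaA N A → ℝ}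
    (h : thetaNorm (dTheta θ) φ < ⊤) : LipD (dTheta θ) φ := by
  have hl : lipConst (dTheta θ) φ ≠ ⊤ := ((ENNReal.add_lt_top.mp h).2).ne
  refine ⟨(lipConst (dTheta θ) φ).toReal, fun x y => ?_⟩
  by_cases hxy : x = y
  · subst hxy
    simp [dTheta_self]
  · rw [← div_le_iff₀ (dTheta_pos h0 h1 hxy), ← ENNReal.ofReal_le_ofReal_iff ENNReal.toReal_nonneg,
      ENNReal.ofReal_toReal hl]
    exact le_iSup₂ (f := fun x y => ENNReal.ofReal (|φ x - φ y| / dTheta θ x y)) x y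

theorem thetaNorm_sub_const {θ : ℝ} (φ : SigmaA N A → ℝ) (c : ℝ) :
    thetaNorm (dTheta θ) (fun x => φ x - c) ≤ thetaNorm (dTheta θ) φ + ENNReal.ofReal |c| := by
  have a : supNormE (fun x => φ x - c) ≤ supNormE φ + ENNReal.ofReal |c| := by
    refine iSup_le fun x => ?_
    refine (ENNReal.ofReal_le_ofReal (abs_sub _ _)).trans ?_
    refine ENNReal.ofReal_add_le.trans ?_
    gcongr
    exact le_iSup (fun x => ENNReal.ofReal |φ x|) x
  have b : lipConst (dTheta θ) (fun x => φ x - c) = lipConst (dTheta θ) φ := by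
    simp [lipConst]
  rw [thetaNorm, thetaNorm, b, add_right_comm]
  gcongr

theorem LipD.BM' {θ : ℝ} (h0 : 0 < θ) (h1 : θ < 1) {φ : SigmaA N A → ℝ}
    (h : LipD (dTheta θ) φ) : BM φ := by
  refine ⟨(h.cont h0 h1).measurable, (thetaNorm (dTheta θ) φ).toReal, fun x => ?_⟩
  refine abs_le_thetaNorm (θ := θ) ENNReal.toReal_nonneg ?_ x
  rw [ENNReal.ofReal_toReal (h.lt_top h0 h1).ne]

end Lip

section Step

theorem sInt_lin {X : Type*} [MeasurableSpace X] (ν : SignedMeasure X) {a b : X → ℝ}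
    (ha : BM a) (hb : BM b) (c : ℝ) :
    sInt ν (fun x => c * a x + b x) = c * sInt ν a + sInt ν b := by
  unfold sInt
  rw [integral_add ((ha.integrable _).const_mul c) (hb.integrable _),
    integral_add ((ha.integrable _).const_mul c) (hb.integrable _), integral_const_mul,
    integral_const_mul]
  ring

theorem Bd_transfer {m : Measure (SigmaA N A)} [IsProbabilityMeasure m]
    (hminv : m.map shift = m)
    (hdiam : Metric.diam (Set.univ : Set K) = 1)
    {G : SigmaA N A × K → K} (hskew : Measurable (skew G))
    {α : ℝ} (hα0 : 0 < α) (hG1 : CondG1 G α)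
    {ν : SignedMeasure (SigmaA N A × K)} {B C : ℝ} (hB : Bd m ν B) (hC0 : 0 ≤ C)
    (hC : ∀ f : SigmaA N A → ℝ, BM f → |sInt ν (fun p => f p.1)| ≤ C * ∫ x, |f x| ∂m) :
    Bd m (transfer G ν) (α * B + C) := by
  intro f hf hf0 u hum hu1 hul
  obtain ⟨z0⟩ := ‹Nonempty K›
  have hd1 : ∀ a b : K, dist a b ≤ 1 := fun a b => by
    rw [← hdiam]
    exact Metric.dist_le_diam_of_mem isCompact_univ.isBounded (mem_univ _) (mem_univ _)
  have hsm : Measurable (shift : SigmaA N A → SigmaA N A) := shift_continuous.measurable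
  have hfs : BM (fun x => f (shift x)) := hf.comp hsm
  have hvb : BM (fun p => u (skew G p)) := ⟨hum.comp hskew, 1, fun p => hu1 _⟩
  have hkb : BM (fun x : SigmaA N A => u (skew G (x, z0))) :=
    hvb.comp (measurable_id.prodMk measurable_const)
  have hdv : ∀ x z z', |u (skew G (x, z)) - u (skew G (x, z'))| ≤ α * dist z z' := by
    intro x z z'
    have := (hul (shift x)).dist_le_mul (G (x, z)) (G (x, z'))
    rw [NNReal.coe_one, one_mul, Real.dist_eq] at this
    exact this.trans (hG1 x z z')
  let w : SigmaA N A × K → ℝ := fun p => α⁻¹ * (u (skew G p) - u (skew G (p.1, z0)))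
  have hwm : Measurable w := (hvb.1.sub (hkb.1.comp measurable_fst)).const_mul _
  have hwl : ∀ x, LipschitzWith 1 fun z => w (x, z) := by
    intro x
    refine LipschitzWith.of_dist_le_mul fun z z' => ?_
    rw [Real.dist_eq, NNReal.coe_one, one_mul]
    have : w (x, z) - w (x, z') = α⁻¹ * (u (skew G (x, z)) - u (skew G (x, z'))) := by
      simp only [w]; ring
    rw [this, abs_mul, abs_of_pos (inv_pos.mpr hα0), inv_mul_le_iff₀ hα0]
    exact hdv x z z'
  have hw1 : ∀ p, |w p| ≤ 1 := by
    rintro ⟨x, z⟩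
    simp only [w]
    rw [abs_mul, abs_of_pos (inv_pos.mpr hα0), inv_mul_le_iff₀ hα0]
    exact (hdv x z z0).trans (mul_le_mul_of_nonneg_left (hd1 _ _) hα0.le)
  have hinv : ∫ x, f (shift x) ∂m = ∫ x, f x ∂m := by
    conv_rhs => rw [← hminv]
    rw [integral_map hsm.aemeasurable hf.1.aestronglyMeasurable]
  have hfu : BM (fun p : SigmaA N A × K => f p.1 * u p) :=
    (hf.comp measurable_fst).mul ⟨hum, 1, hu1⟩
  have e1 : sInt (transfer G ν) (fun p => f p.1 * u p) =
      α * sInt ν (fun p => f (shift p.1) * w p)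
        + sInt ν (fun p => f (shift p.1) * u (skew G (p.1, z0))) := by
    rw [transfer, sInt_map ν hskew hfu, ← sInt_lin ν
      ((hfs.comp measurable_fst).mul ⟨hwm, 1, hw1⟩)
      ((hfs.comp measurable_fst).mul (hkb.comp measurable_fst)) α]
    congr 1
    ext p
    simp only [w]
    change f (shift p.1) * u (skew G p) = _
    field_simp
    ring
  have b1 := hB _ hfs (fun x => hf0 _) w hwm hw1 hwl
  have b2 := hC _ (hfs.mul hkb)
  have b3 : ∫ x, |f (shift x) * u (skew G (x, z0))| ∂m ≤ ∫ x, f (shift x) ∂m := by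
    refine integral_mono ((hfs.mul hkb).integrable m).abs (hfs.integrable m) fun x => ?_
    simp only
    rw [abs_mul, abs_of_nonneg (hf0 _)]
    exact mul_le_of_le_one_right (hf0 _) (hu1 _)
  rw [hinv] at b1 b3
  rw [e1]
  calc _ ≤ |α * sInt ν (fun p => f (shift p.1) * w p)|
        + |sInt ν (fun p => f (shift p.1) * u (skew G (p.1, z0)))| := abs_add_le _ _
    _ ≤ α * (B * ∫ x, f x ∂m) + C * ∫ x, f x ∂m := by
        rw [abs_mul, abs_of_pos hα0]
        exact add_le_add (mul_le_mul_of_nonneg_left b1 hα0.le)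
          (b2.trans (mul_le_mul_of_nonneg_left b3 hC0))
    _ = _ := by ring

theorem SAC.transfer {m : Measure (SigmaA N A)} (hminv : m.map shift = m)
    {G : SigmaA N A × K → K} (hskew : Measurable (skew G))
    {ν : SignedMeasure (SigmaA N A × K)} (h : SAC m ν) : SAC m (transfer G ν) := by
  intro E hE B hB hm hEB
  have hsm : Measurable (shift : SigmaA N A → SigmaA N A) := shift_continuous.measurable
  rw [RDS.transfer, VectorMeasure.map_apply _ hskew hE]
  refine h _ (hskew hE) (shift ⁻¹' B) (hsm hB) ?_ ?_
  · rw [← Measure.map_apply hsm hB, hminv, hm]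
  · intro p hp
    exact hEB hp

theorem dens_bound {m : Measure (SigmaA N A)} [IsProbabilityMeasure m]
    {ν : SignedMeasure (SigmaA N A × K)} (h : SAC m ν) {φ : SigmaA N A → ℝ}
    (hφ : BM φ) (he : ∀ B, MeasurableSet B → ν (Prod.fst ⁻¹' B) = ∫ x in B, φ x ∂m)
    {C : ℝ} (hC : ∀ x, |φ x| ≤ C) (f : SigmaA N A → ℝ) (hf : BM f) :
    |sInt ν (fun p => f p.1)| ≤ C * ∫ x, |f x| ∂m := by
  have hae := phi_ae h (hφ.integrable m) he
  rw [phi_sInt h hf]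
  have : ∫ x, phiPair m (jPos ν) (jNeg ν) x * f x ∂m = ∫ x, φ x * f x ∂m := by
    apply integral_congr_ae
    filter_upwards [hae] with x hx
    rw [hx]
  rw [this, ← integral_const_mul, ← Real.norm_eq_abs]
  refine norm_integral_le_of_norm_le ((hf.integrable m).abs.const_mul C)
    (Filter.Eventually.of_forall fun x => ?_)
  rw [Real.norm_eq_abs, abs_mul]
  exact mul_le_mul_of_nonneg_right (hC x) (abs_nonneg _)

theorem dens_transfer {m : Measure (SigmaA N A)} [IsProbabilityMeasure m]
    {G : SigmaA N A × K → K} (hskew : Measurable (skew G))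
    {Pσ : (SigmaA N A → ℝ) → SigmaA N A → ℝ} (hPF : IsPerronFrobenius m Pσ)
    {ν : SignedMeasure (SigmaA N A × K)} {φ : SigmaA N A → ℝ}
    (hφ : BM φ) (he : ∀ B, MeasurableSet B → ν (Prod.fst ⁻¹' B) = ∫ x in B, φ x ∂m)
    (B : Set (SigmaA N A)) (hB : MeasurableSet B) :
    transfer G ν (Prod.fst ⁻¹' B) = ∫ x in B, Pσ φ x ∂m := by
  have hsm : Measurable (shift : SigmaA N A → SigmaA N A) := shift_continuous.measurable
  rw [transfer, VectorMeasure.map_apply _ hskew (measurable_fst hB)]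
  have h1 : skew G ⁻¹' (Prod.fst ⁻¹' B) = Prod.fst ⁻¹' (shift ⁻¹' B) := rfl
  rw [h1, he _ (hsm hB), ← integral_indicator (hsm hB), ← integral_indicator hB]
  have h2 := hPF φ (B.indicator fun _ => 1) (hφ.integrable m) (BM_indicator hB).1 (BM_indicator hB).2
  have aux : ∀ (f : SigmaA N A → ℝ) (g : SigmaA N A → SigmaA N A) x,
      f x * B.indicator (fun _ => (1 : ℝ)) (g x) = (g ⁻¹' B).indicator f x := by
    intro f g x
    by_cases hx : g x ∈ B
    · rw [indicator_of_mem hx, indicator_of_mem (show x ∈ g ⁻¹' B from hx), mul_one]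
    · rw [indicator_of_notMem hx, indicator_of_notMem (show x ∉ g ⁻¹' B from hx), mul_zero]
  have h3 := aux (Pσ φ) id
  simp only [id, preimage_id_eq] at h3
  simp_rw [aux φ shift, h3] at h2
  exact h2.symm

end Step



section Final

theorem core_iter {θ : ℝ} (hθ0 : 0 < θ) (hθ1 : θ < 1)
    {m : Measure (SigmaA N A)} [IsProbabilityMeasure m] (hminv : m.map shift = m)
    (hdiam : Metric.diam (Set.univ : Set K) = 1)
    {G : SigmaA N A × K → K} (hGm : Measurable (skew G))
    {α : ℝ} (hα0 : 0 < α) (hG1 : CondG1 G α)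
    {Pσ : (SigmaA N A → ℝ) → SigmaA N A → ℝ} (hPF : IsPerronFrobenius m Pσ)
    {D r : ℝ} (hD : 0 < D) (hr0 : 0 < r) (hgap : HasGap m θ Pσ D r)
    {ξ : ℝ} (hαξ : α < ξ) (hrξ : r ≤ ξ)
    {ν : SignedMeasure (SigmaA N A × K)} (hν : SAC m ν) {φ : SigmaA N A → ℝ}
    (hφ : LipD (dTheta θ) φ) (hφ0 : ∫ x, φ x ∂m = 0)
    (he : ∀ B, MeasurableSet B → ν (Prod.fst ⁻¹' B) = ∫ x in B, φ x ∂m)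
    {s : ℝ} (hs : 0 ≤ s) (hφs : thetaNorm (dTheta θ) φ ≤ ENNReal.ofReal s)
    {B : ℝ} (hB0 : 0 ≤ B) (hB : Bd m ν B) (n : ℕ) :
    SAC m ((transfer G)^[n] ν) ∧
      (∀ B, MeasurableSet B →
        ((transfer G)^[n] ν) (Prod.fst ⁻¹' B) = ∫ x in B, (Pσ^[n] φ) x ∂m) ∧
      Bd m ((transfer G)^[n] ν) ((B + D * s / (ξ - α)) * ξ ^ n) := by
  have hpos : 0 < ξ - α := sub_pos.mpr hαξ
  have hnorm : ∀ n, thetaNorm (dTheta θ) (Pσ^[n] φ) ≤ ENNReal.ofReal (D * r ^ n * s) := by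
    intro n
    refine (hgap φ hφ hφ0 n).trans ?_
    rw [ENNReal.ofReal_mul (by positivity : 0 ≤ D * r ^ n)]
    exact mul_le_mul_right hφs _
  have hlip : ∀ n, LipD (dTheta θ) (Pσ^[n] φ) := fun n =>
    LipD_of_lt_top hθ0 hθ1 ((hnorm n).trans_lt ENNReal.ofReal_lt_top)
  have hmono : ∀ {b b' : ℝ} {ν' : SignedMeasure (SigmaA N A × K)}, b ≤ b' → Bd m ν' b →
      Bd m ν' b' := by
    intro b b' ν' hbb h f hf hf0 u hu hu1 hul
    exact (h f hf hf0 u hu hu1 hul).trans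
      (mul_le_mul_of_nonneg_right hbb (integral_nonneg hf0))
  induction n with
  | zero =>
    refine ⟨hν, he, hmono ?_ hB⟩
    have : 0 ≤ D * s / (ξ - α) := by positivity
    simp only [pow_zero, mul_one]
    linarith
  | succ n ih =>
    obtain ⟨h1, h2, h3⟩ := ih
    simp only [Function.iterate_succ_apply']
    refine ⟨h1.transfer hminv hGm, dens_transfer hGm hPF ((hlip n).BM' hθ0 hθ1) h2, ?_⟩
    have hC := dens_bound h1 ((hlip n).BM' hθ0 hθ1) h2
      (abs_le_thetaNorm (θ := θ) (by positivity) (hnorm n))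
    refine hmono ?_ (Bd_transfer hminv hdiam hGm hα0 hG1 h3 (by positivity) hC)
    have hrn : r ^ n ≤ ξ ^ n := pow_le_pow_left₀ hr0.le hrξ n
    have hξn : 0 ≤ ξ ^ n := pow_nonneg (hr0.le.trans hrξ) n
    have e : D * s / (ξ - α) * (ξ - α) = D * s := div_mul_cancel₀ _ hpos.ne'
    have e2 : D * r ^ n * s ≤ D * s * ξ ^ n := by
      have := mul_le_mul_of_nonneg_left hrn (mul_nonneg hD.le hs)
      linarith
    have e3 : D * s * ξ ^ n ≤ (B + D * s / (ξ - α)) * ξ ^ n * (ξ - α) := by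
      have : (B + D * s / (ξ - α)) * ξ ^ n * (ξ - α)
        = B * ξ ^ n * (ξ - α) + (D * s / (ξ - α) * (ξ - α)) * ξ ^ n := by ring
      rw [this, e]
      have : 0 ≤ B * ξ ^ n * (ξ - α) := by positivity
      linarith
    rw [pow_succ]
    nlinarith

theorem core_norm {θ : ℝ} (hθ0 : 0 < θ) (hθ1 : θ < 1)
    {m : Measure (SigmaA N A)} [IsProbabilityMeasure m] (hminv : m.map shift = m)
    (hdiam : Metric.diam (Set.univ : Set K) = 1)
    {G : SigmaA N A × K → K} (hGm : Measurable (skew G))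
    {α : ℝ} (hα0 : 0 < α) (hG1 : CondG1 G α)
    {Pσ : (SigmaA N A → ℝ) → SigmaA N A → ℝ} (hPF : IsPerronFrobenius m Pσ)
    {D r : ℝ} (hD : 0 < D) (hr0 : 0 < r) (hgap : HasGap m θ Pσ D r)
    {ξ : ℝ} (hαξ : α < ξ) (hrξ : r ≤ ξ)
    {ν : SignedMeasure (SigmaA N A × K)} (hν : SAC m ν) {φ : SigmaA N A → ℝ}
    (hφ : LipD (dTheta θ) φ) (hφ0 : ∫ x, φ x ∂m = 0)
    (he : ∀ B, MeasurableSet B → ν (Prod.fst ⁻¹' B) = ∫ x in B, φ x ∂m)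
    {s : ℝ} (hs : 0 ≤ s) (hφs : thetaNorm (dTheta θ) φ ≤ ENNReal.ofReal s)
    {B : ℝ} (hB0 : 0 ≤ B) (hB : Bd m ν B) (n : ℕ) :
    sNorm m θ ((transfer G)^[n] ν) ≤
      ENNReal.ofReal ((D * s + (B + D * s / (ξ - α))) * ξ ^ n) := by
  obtain ⟨h1, h2, h3⟩ := core_iter hθ0 hθ1 hminv hdiam hGm hα0 hG1 hPF hD hr0 hgap hαξ hrξ hν hφ
    hφ0 he hs hφs hB0 hB n
  have hpos : 0 < ξ - α := sub_pos.mpr hαξ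
  have hξ0 : 0 < ξ := hα0.trans hαξ
  have hn : thetaNorm (dTheta θ) (Pσ^[n] φ) ≤ ENNReal.ofReal (D * s * ξ ^ n) := by
    refine (hgap φ hφ hφ0 n).trans ?_
    refine (mul_le_mul_right hφs _).trans ?_
    rw [← ENNReal.ofReal_mul (by positivity)]
    refine ENNReal.ofReal_le_ofReal ?_
    have hrn : r ^ n ≤ ξ ^ n := pow_le_pow_left₀ hr0.le hrξ n
    have := mul_le_mul_of_nonneg_left hrn (mul_nonneg hD.le hs)
    linarith
  have hlip : LipD (dTheta θ) (Pσ^[n] φ) :=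
    LipD_of_lt_top hθ0 hθ1 (hn.trans_lt ENNReal.ofReal_lt_top)
  have hae := phi_ae h1 ((hlip.BM' hθ0 hθ1).integrable m) h2
  have a : thetaNormMu m θ (jPos ((transfer G)^[n] ν)) (jNeg ((transfer G)^[n] ν)) ≤
      ENNReal.ofReal (D * s * ξ ^ n) :=
    (iInf_le (fun ψ : {ψ : SigmaA N A → ℝ //
      ψ =ᵐ[m] phiPair m (jPos ((transfer G)^[n] ν)) (jNeg ((transfer G)^[n] ν))} =>
        thetaNorm (dTheta θ) ψ.val) ⟨_, hae⟩).trans hn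
  have b := infNorm_of_Bd h1 h3
  rw [add_mul, ENNReal.ofReal_add (by positivity) (by positivity)]
  exact add_le_add a b

theorem main_bound {θ : ℝ} (hθ0 : 0 < θ) (hθ1 : θ < 1)
    {m : Measure (SigmaA N A)} [IsProbabilityMeasure m] (hminv : m.map shift = m)
    (hdiam : Metric.diam (Set.univ : Set K) = 1)
    {G : SigmaA N A × K → K} (hGm : Measurable (skew G))
    {α : ℝ} (hα0 : 0 < α) (hG1 : CondG1 G α)
    {Pσ : (SigmaA N A → ℝ) → SigmaA N A → ℝ} (hPF : IsPerronFrobenius m Pσ)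
    {D r : ℝ} (hD : 0 < D) (hr0 : 0 < r) (hgap : HasGap m θ Pσ D r)
    {ξ : ℝ} (hαξ : α < ξ) (hrξ : r ≤ ξ)
    {M : Measure (SigmaA N A × K)} [IsProbabilityMeasure M] (hM : M.map Prod.fst = m)
    {μ : SignedMeasure (SigmaA N A × K)} (hμ : MemS m θ μ) (n : ℕ) :
    sNorm m θ ((transfer G)^[n] (μ - (μ univ) • M.toSignedMeasure)) ≤
      ENNReal.ofReal ((2 * D + 1 + 2 * D / (ξ - α)) * ξ ^ n) * sNorm m θ μ := by
  have hpos : 0 < ξ - α := sub_pos.mpr hαξ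
  have hξ0 : 0 < ξ := hα0.trans hαξ
  obtain ⟨⟨hac1, hac2, -, -⟩, hfin, -⟩ := hμ
  have hμS : SAC m μ := SAC.mk' hac1 hac2
  have hinf : infNorm m μ ≠ ⊤ := hfin.ne
  set B0 := (infNorm m μ).toReal with hB0
  have hB00 : 0 ≤ B0 := ENNReal.toReal_nonneg
  have hBd : Bd m μ B0 := Bd_of_infNorm hμS hB00 (by rw [ENNReal.ofReal_toReal hinf])
  set c := μ univ with hc
  have hMS : SAC m M.toSignedMeasure := by
    intro E hE B hB hm hEB
    rw [Measure.toSignedMeasure_apply_measurable hE, measureReal_def]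
    have : M E = 0 := by
      refine measure_mono_null hEB ?_
      rw [← Measure.map_apply measurable_fst hB, hM, hm]
    rw [this, ENNReal.toReal_zero]
  have hνS : SAC m (μ - c • M.toSignedMeasure) := by
    intro E hE B hB hm hEB
    rw [VectorMeasure.sub_apply, VectorMeasure.smul_apply, hμS E hE B hB hm hEB,
      hMS E hE B hB hm hEB]
    simp
  have hνB : Bd m (μ - c • M.toSignedMeasure) (B0 + |c|) := by
    intro f hf hf0 u hu hu1 hul
    have hfu : BM (fun p : SigmaA N A × K => f p.1 * u p) :=
      (hf.comp measurable_fst).mul ⟨hu, 1, hu1⟩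
    have h1 := hBd f hf hf0 u hu hu1 hul
    have h2 : |∫ p, f p.1 * u p ∂M| ≤ ∫ x, f x ∂m := by
      rw [← hM, integral_map measurable_fst.aemeasurable hf.1.aestronglyMeasurable,
        ← Real.norm_eq_abs]
      refine norm_integral_le_of_norm_le ((hf.comp measurable_fst).integrable M)
        (Filter.Eventually.of_forall fun p => ?_)
      rw [Real.norm_eq_abs, abs_mul, abs_of_nonneg (hf0 _)]
      exact mul_le_of_le_one_right (hf0 _) (hu1 p)
    rw [sInt_sub_smul _ _ _ hfu]
    refine (abs_sub _ _).trans ?_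
    rw [abs_mul]
    have := mul_le_mul_of_nonneg_left h2 (abs_nonneg c)
    linarith
  have key : ∀ ψ : SigmaA N A → ℝ, ψ =ᵐ[m] phiPair m (jPos μ) (jNeg μ) →
      sNorm m θ ((transfer G)^[n] (μ - c • M.toSignedMeasure)) ≤
      ENNReal.ofReal ((2 * D + 1 + 2 * D / (ξ - α)) * ξ ^ n) *
        (thetaNorm (dTheta θ) ψ + infNorm m μ) := by
    intro ψ hψ
    have hKpos : 0 < (2 * D + 1 + 2 * D / (ξ - α)) * ξ ^ n := by positivity
    by_cases htop : thetaNorm (dTheta θ) ψ = ⊤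
    · rw [htop, top_add, ENNReal.mul_top (ENNReal.ofReal_pos.mpr hKpos).ne']
      exact le_top
    have hψL : LipD (dTheta θ) ψ := LipD_of_lt_top hθ0 hθ1 (lt_top_iff_ne_top.mpr htop)
    set t := (thetaNorm (dTheta θ) ψ).toReal with ht
    have ht0 : 0 ≤ t := ENNReal.toReal_nonneg
    have htn : thetaNorm (dTheta θ) ψ = ENNReal.ofReal t := (ENNReal.ofReal_toReal htop).symm
    have hψB : BM ψ := hψL.BM' hθ0 hθ1
    have hψset : ∀ B, MeasurableSet B → μ (Prod.fst ⁻¹' B) = ∫ x in B, ψ x ∂m := by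
      intro B hB
      rw [phi_set hμS hB]
      exact integral_congr_ae (ae_restrict_of_ae hψ.symm)
    have hcint : c = ∫ x, ψ x ∂m := by
      have := hψset univ MeasurableSet.univ
      rwa [preimage_univ, setIntegral_univ] at this
    have hct : |c| ≤ t := by
      rw [hcint, ← Real.norm_eq_abs]
      refine (norm_integral_le_of_norm_le_const (C := t)
        (Filter.Eventually.of_forall fun x => ?_)).trans ?_
      · exact abs_le_thetaNorm (θ := θ) ht0 htn.le x
      · simp
    have hφn : thetaNorm (dTheta θ) (fun x => ψ x - c) ≤ ENNReal.ofReal (2 * t) := by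
      refine (thetaNorm_sub_const ψ c).trans ?_
      rw [htn, ← ENNReal.ofReal_add ht0 (abs_nonneg c)]
      exact ENNReal.ofReal_le_ofReal (by linarith)
    have hφL : LipD (dTheta θ) (fun x => ψ x - c) :=
      LipD_of_lt_top hθ0 hθ1 (hφn.trans_lt ENNReal.ofReal_lt_top)
    have hφ0 : ∫ x, (ψ x - c) ∂m = 0 := by
      rw [integral_sub (hψB.integrable m) (integrable_const c), ← hcint]
      simp
    have he : ∀ B, MeasurableSet B → (μ - c • M.toSignedMeasure) (Prod.fst ⁻¹' B) =
        ∫ x in B, (ψ x - c) ∂m := by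
      intro B hB
      rw [integral_sub (hψB.integrable _) (integrable_const c), VectorMeasure.sub_apply,
        VectorMeasure.smul_apply, hψset B hB,
        Measure.toSignedMeasure_apply_measurable (measurable_fst hB),
        ← map_measureReal_apply measurable_fst hB, hM]
      simp [mul_comm]
    refine (core_norm hθ0 hθ1 hminv hdiam hGm hα0 hG1 hPF hD hr0 hgap hαξ hrξ hνS hφL hφ0 he
      (by positivity : 0 ≤ 2 * t) hφn (by positivity) hνB n).trans ?_
    rw [htn, ← ENNReal.ofReal_toReal hinf, ← hB0, ← ENNReal.ofReal_add ht0 hB00,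
      ← ENNReal.ofReal_mul hKpos.le]
    refine ENNReal.ofReal_le_ofReal ?_
    rw [mul_right_comm]
    refine mul_le_mul_of_nonneg_right ?_ (by positivity)
    have e : D * (2 * t) / (ξ - α) = 2 * D / (ξ - α) * t := by ring
    have p : 0 ≤ 2 * D / (ξ - α) * B0 := by positivity
    have q : 0 ≤ D * B0 := by positivity
    rw [e]
    linarith
  have hne : ENNReal.ofReal ((2 * D + 1 + 2 * D / (ξ - α)) * ξ ^ n) ≠ 0 :=
    (ENNReal.ofReal_pos.mpr (by positivity)).ne'
  change _ ≤ _ * (thetaNormMu m θ (jPos μ) (jNeg μ) + infNorm m μ)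
  rw [thetaNormMu, ENNReal.iInf_add, ENNReal.mul_iInf_of_ne hne ENNReal.ofReal_ne_top]
  exact le_iInf fun ψ => key ψ.val ψ.prop

end Final


/-- **Spectral gap for the transfer operator on `S^∞`.**
`F^* = P + N` on `S^∞`, where `P` is a projection with one-dimensional
image, `‖N^n μ‖_{S^∞} ≤ K ξ^n ‖μ‖_{S^∞}` for some `ξ ∈ (0,1)`, `K > 0`,
and `PN = NP = 0`. -/
theorem transfer_operator_spectral_gap
    (N : ℕ) (A : Fin N → Fin N → Bool) (hA : Aperiodic A)
    (θ : ℝ) (hθ0 : 0 < θ) (hθ1 : θ < 1)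
    (m : Measure (SigmaA N A)) [IsProbabilityMeasure m]
    (hmM : IsMarkov m) (hminv : m.map shift = m)
    {K : Type*} [MetricSpace K] [CompactSpace K] [Nonempty K]
    [MeasurableSpace K] [BorelSpace K]
    (hdiam : Metric.diam (Set.univ : Set K) = 1)
    (G : SigmaA N A × K → K) (hGm : Measurable (skew G))
    (α : ℝ) (hα0 : 0 < α) (hα1 : α < 1) (hG1 : CondG1 G α)
    (Pσ : (SigmaA N A → ℝ) → SigmaA N A → ℝ) (hPF : IsPerronFrobenius m Pσ)
    (D r : ℝ) (hD : 0 < D) (hr0 : 0 < r) (hr1 : r < 1)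
    (hgap : HasGap m θ Pσ D r)
    (C₂ : ℝ) (hC₂ : 0 < C₂)
    (hLY : ∀ φ : SigmaA N A → ℝ, LipD (dTheta θ) φ → ∀ n : ℕ, 1 ≤ n →
      thetaNorm (dTheta θ) (Pσ^[n] φ) ≤
        ENNReal.ofReal (θ ^ n) * thetaNorm (dTheta θ) φ +
          ENNReal.ofReal C₂ * supNormE φ) :
    ∃ P Nop : SignedMeasure (SigmaA N A × K) → SignedMeasure (SigmaA N A × K),
      (∀ μ, MemS m θ μ → transfer G μ = P μ + Nop μ) ∧
      (∀ μ, MemS m θ μ → P (P μ) = P μ) ∧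
      (∃ ν₀ : SignedMeasure (SigmaA N A × K), ν₀ ≠ 0 ∧
        ∀ μ, MemS m θ μ → ∃ c : ℝ, P μ = c • ν₀) ∧
      (∃ ξ K₀ : ℝ, 0 < ξ ∧ ξ < 1 ∧ 0 < K₀ ∧
        ∀ μ, MemS m θ μ → ∀ n : ℕ, 1 ≤ n →
          sNorm m θ (Nop^[n] μ) ≤ ENNReal.ofReal (K₀ * ξ ^ n) * sNorm m θ μ) ∧
      (∀ μ, MemS m θ μ → P (Nop μ) = 0 ∧ Nop (P μ) = 0) := by
  have hG : Measurable G := measurable_snd.comp hGm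
  obtain ⟨M, hMp, hMinv, hMfst⟩ := exists_invariant m hminv hdiam G hG α hα0 hα1 hG1
  have hTs : ∀ (μ ν : SignedMeasure (SigmaA N A × K)) (c : ℝ),
      transfer G (μ - c • ν) = transfer G μ - c • transfer G ν := by
    intro μ ν c
    ext E hE
    simp only [transfer, VectorMeasure.sub_apply, VectorMeasure.smul_apply,
      VectorMeasure.map_apply _ hGm hE]
  have hTm : ∀ μ : SignedMeasure (SigmaA N A × K), transfer G μ univ = μ univ := by
    intro μ
    rw [transfer, VectorMeasure.map_apply _ hGm MeasurableSet.univ, preimage_univ]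
  have hT0 : transfer G M.toSignedMeasure = M.toSignedMeasure := by
    ext E hE
    rw [transfer, VectorMeasure.map_apply _ hGm hE,
      Measure.toSignedMeasure_apply_measurable (hGm hE),
      Measure.toSignedMeasure_apply_measurable hE, ← map_measureReal_apply hGm hE, hMinv]
  have hM1 : M.toSignedMeasure univ = 1 := by
    rw [Measure.toSignedMeasure_apply_measurable MeasurableSet.univ]
    simp
  have hiter : ∀ (μ : SignedMeasure (SigmaA N A × K)) (n : ℕ), 1 ≤ n →
      (fun μ : SignedMeasure (SigmaA N A × K) =>
        transfer G μ - (μ univ) • M.toSignedMeasure)^[n] μ =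
      (transfer G)^[n] (μ - (μ univ) • M.toSignedMeasure) ∧
      ((transfer G)^[n] (μ - (μ univ) • M.toSignedMeasure)) univ = 0 := by
    intro μ n hn
    induction n, hn using Nat.le_induction with
    | base =>
      refine ⟨?_, ?_⟩
      · simp only [Function.iterate_one, hTs, hT0]
      · simp only [Function.iterate_one, hTm, VectorMeasure.sub_apply, VectorMeasure.smul_apply,
          hM1, smul_eq_mul, mul_one, sub_self]
    | succ n hn ih =>
      obtain ⟨i1, i2⟩ := ih
      refine ⟨?_, ?_⟩
      · rw [Function.iterate_succ_apply', i1, Function.iterate_succ_apply', i2, zero_smul, sub_zero]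
      · rw [Function.iterate_succ_apply', hTm, i2]
  refine ⟨fun μ => (μ univ) • M.toSignedMeasure,
    fun μ => transfer G μ - (μ univ) • M.toSignedMeasure, ?_, ?_, ?_, ?_, ?_⟩
  · intro μ _
    exact (add_sub_cancel _ _).symm
  · intro μ _
    simp only [VectorMeasure.smul_apply, hM1, smul_eq_mul, mul_one]
  · refine ⟨M.toSignedMeasure, fun h => ?_, fun μ _ => ⟨_, rfl⟩⟩
    rw [h] at hM1
    simp at hM1
  · have hmax : max α r < 1 := max_lt hα1 hr1
    have ha := le_max_left α r
    have hb := le_max_right α r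
    have hαξ : α < (1 + max α r) / 2 := by linarith
    refine ⟨(1 + max α r) / 2, 2 * D + 1 + 2 * D / ((1 + max α r) / 2 - α), by linarith,
      by linarith, ?_, ?_⟩
    · have : 0 < (1 + max α r) / 2 - α := by linarith
      positivity
    · intro μ hμ n hn
      rw [(hiter μ n hn).1]
      exact main_bound hθ0 hθ1 hminv hdiam hGm hα0 hG1 hPF hD hr0 hgap hαξ (by linarith) hMfst hμ n
  · intro μ _
    refine ⟨?_, ?_⟩
    · simp only [VectorMeasure.sub_apply, VectorMeasure.smul_apply, hTm, hM1, smul_eq_mul, mul_one,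
        sub_self, zero_smul]
    · have h0 : transfer G ((μ univ) • M.toSignedMeasure) = (μ univ) • M.toSignedMeasure := by
        nth_rewrite 2 [← hT0]
        ext E hE
        simp only [transfer, VectorMeasure.smul_apply, VectorMeasure.map_apply _ hGm hE]
      simp only [h0, VectorMeasure.smul_apply, hM1, smul_eq_mul, mul_one, sub_self]

end RDS
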